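/- For V(x) = log(1+|x|²), the weighted logarithmic energy of μ_V equals 1/2; that is, ∬_{ℝ²×ℝ²} ( (1/2)log(1+|x|²) + (1/2)log(1+|y|²) − log|x−y| ) dμ_V(x) dμ_V(y) = 1/2. -/

import Mathlib

open Real MeasureTheory

/-- The equilibrium measure `μ_V`, with density `1/(π(1+|x|²)²)` w.r.t. Lebesgue measure. -/
noncomputable def muV : Measure (EuclideanSpace ℝ (Fin 2)) :=
  volume.withDensity fun x => ENNReal.ofReal (1 / (π * (1 + ‖x‖^2)^2))

/-!
Stereographic projection turns `μ_V` into the uniform probability measure on the sphere of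
diameter `1`, and turns the energy kernel into `-log` of the chordal distance there. Since the
measure is invariant under rotations, which act on the plane as the Möbius maps
`z ↦ (z - a) / (1 + conj a * z)`, the potential at any point `a` equals the potential at `0`. By
Archimedes' hat-box theorem the squared chordal distance to `0` is uniformly distributed on
`[0, 1]`, so this potential is `∫₀¹ -(1/2) log t dt = 1/2`.
-/

open Set
open scoped ComplexConjugate

section PlaneIntegrals

variable {F : Type*} [NormedAddCommGroup F] [NormedSpace ℝ F]

lemma det_restrictScalars_toSpanSingleton (c : ℂ) :
    ((ContinuousLinearMap.toSpanSingleton ℂ c).restrictScalars ℝ).det = ‖c‖ ^ 2 := by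
  simp [ContinuousLinearMap.det, LinearMap.det_restrictScalars, Algebra.norm_complex_apply,
    Complex.normSq_eq_norm_sq]

lemma integral_image_eq_integral_norm_deriv_sq_smul {s : Set ℂ} {f f' : ℂ → ℂ}
    (hs : MeasurableSet s) (hf' : ∀ z ∈ s, HasDerivWithinAt f (f' z) s z) (hf : InjOn f s)
    (g : ℂ → F) :
    ∫ w in f '' s, g w = ∫ z in s, ‖f' z‖ ^ 2 • g (f z) := by
  simpa [det_restrictScalars_toSpanSingleton] using
    integral_image_eq_integral_abs_det_fderiv_smul volume hs
      (fun z hz => (hf' z hz).hasFDerivWithinAt.restrictScalars ℝ) hf g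

lemma integral_fun_norm_complex (g : ℝ → F) :
    ∫ z : ℂ, g ‖z‖ = ∫ r in Ioi 0, (2 * π * r) • g r := by
  rw [integral_fun_norm_addHaar]
  simp only [Complex.finrank_real_complex, Measure.real, Complex.volume_ball, mul_smul,
    integral_smul]
  simp [two_smul]

end PlaneIntegrals

section ChordalDistance

variable {E : Type*} [NormedAddCommGroup E]

/-- The square of the chordal distance between `x` and `y`, that is, of the Euclidean distance
between their inverse stereographic projections on the sphere of diameter `1`. -/
noncomputable def chordalDistSq (x y : E) : ℝ :=
  dist x y ^ 2 / ((1 + ‖x‖ ^ 2) * (1 + ‖y‖ ^ 2))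

lemma chordalDistSq_zero_left (y : E) : chordalDistSq 0 y = ‖y‖ ^ 2 / (1 + ‖y‖ ^ 2) := by
  simp [chordalDistSq]

lemma chordalDistSq_map {E' : Type*} [NormedAddCommGroup E'] [NormedSpace ℝ E] [NormedSpace ℝ E']
    (e : E ≃ₗᵢ[ℝ] E') (x y : E) : chordalDistSq (e x) (e y) = chordalDistSq x y := by
  simp only [chordalDistSq, e.dist_map, e.norm_map]

lemma neg_half_log_chordalDistSq {x y : E} (hxy : x ≠ y) :
    -(1 / 2) * log (chordalDistSq x y) =
      1 / 2 * log (1 + ‖x‖ ^ 2) + 1 / 2 * log (1 + ‖y‖ ^ 2) - log (dist x y) := by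
  have hd : dist x y ^ 2 ≠ 0 := pow_ne_zero 2 (dist_ne_zero.2 hxy)
  rw [chordalDistSq, log_div hd (by positivity), log_mul (by positivity) (by positivity), log_pow]
  push_cast
  ring

end ChordalDistance

section SphereRotation

/-- The Möbius map of the plane induced, under stereographic projection, by the rotation of the
sphere that takes `a` to `0`. Division by zero gives it the junk value `0` at its pole. -/
noncomputable def sphereRotation (a z : ℂ) : ℂ :=
  (z - a) / (1 + conj a * z)

/-- The plane without the pole of `sphereRotation a`. -/
def rotationDomain (a : ℂ) : Set ℂ := {z | 1 + conj a * z ≠ 0}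

variable {a z w : ℂ}

lemma isOpen_rotationDomain (a : ℂ) : IsOpen (rotationDomain a) :=
  isOpen_ne_fun (by fun_prop) continuous_const

lemma ae_mem_rotationDomain (a : ℂ) : ∀ᵐ z : ℂ, z ∈ rotationDomain a := by
  have hpole : (rotationDomain a)ᶜ.Subsingleton := fun z hz w hw => by
    have hz : 1 + conj a * z = 0 := not_not.1 hz
    have hw : 1 + conj a * w = 0 := not_not.1 hw
    have ha : conj a ≠ 0 := fun h => by simp [h] at hz
    exact mul_left_cancel₀ ha (add_left_cancel (hz.trans hw.symm))
  exact mem_ae_iff.2 (hpole.measure_zero volume)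

lemma restrict_rotationDomain (a : ℂ) : volume.restrict (rotationDomain a) = volume :=
  Measure.restrict_eq_self_of_ae_mem (ae_mem_rotationDomain a)

lemma norm_one_add_conj_mul_self (a : ℂ) : ‖1 + conj a * a‖ = 1 + ‖a‖ ^ 2 := by
  rw [Complex.conj_mul', ← Complex.ofReal_pow, ← Complex.ofReal_one, ← Complex.ofReal_add,
    Complex.norm_of_nonneg (by positivity)]

lemma self_mem_rotationDomain (a : ℂ) : a ∈ rotationDomain a := by
  refine norm_ne_zero_iff.1 ?_
  rw [norm_one_add_conj_mul_self]
  positivity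

lemma sphereRotation_self (a : ℂ) : sphereRotation a a = 0 := by
  simp [sphereRotation]

lemma one_add_conj_neg_mul_sphereRotation (hz : z ∈ rotationDomain a) :
    1 + conj (-a) * sphereRotation a z = (1 + conj a * a) / (1 + conj a * z) := by
  have hz' : 1 + conj a * z ≠ 0 := hz
  rw [sphereRotation, map_neg]
  field_simp
  ring

lemma sphereRotation_mem_rotationDomain (hz : z ∈ rotationDomain a) :
    sphereRotation a z ∈ rotationDomain (-a) := by
  change _ ≠ _
  rw [one_add_conj_neg_mul_sphereRotation hz]
  exact div_ne_zero (self_mem_rotationDomain a) hz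

lemma sphereRotation_neg_sphereRotation (hz : z ∈ rotationDomain a) :
    sphereRotation (-a) (sphereRotation a z) = z := by
  have hz' : 1 + conj a * z ≠ 0 := hz
  have ha : 1 + conj a * a ≠ 0 := self_mem_rotationDomain a
  rw [sphereRotation, one_add_conj_neg_mul_sphereRotation hz, div_eq_iff (div_ne_zero ha hz'),
    sphereRotation, sub_neg_eq_add, div_add' _ _ _ hz', ← mul_div_assoc]
  ring

lemma bijOn_sphereRotation (a : ℂ) :
    BijOn (sphereRotation a) (rotationDomain a) (rotationDomain (-a)) := by
  refine InvOn.bijOn (f' := sphereRotation (-a))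
    ⟨fun z => sphereRotation_neg_sphereRotation, fun w hw => ?_⟩
    (fun z => sphereRotation_mem_rotationDomain) (fun w hw => ?_)
  · simpa using sphereRotation_neg_sphereRotation hw
  · simpa using sphereRotation_mem_rotationDomain hw

lemma hasDerivAt_sphereRotation (hz : z ∈ rotationDomain a) :
    HasDerivAt (sphereRotation a) ((1 + conj a * a) / (1 + conj a * z) ^ 2) z := by
  have hnum : HasDerivAt (fun z => z - a) 1 z := (hasDerivAt_id z).sub_const a
  have hden : HasDerivAt (fun z => 1 + conj a * z) (conj a) z := by
    simpa using ((hasDerivAt_id z).const_mul (conj a)).const_add 1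
  exact (hnum.div hden hz).congr_deriv (by ring)

lemma sphereRotation_sub_sphereRotation (hz : z ∈ rotationDomain a) (hw : w ∈ rotationDomain a) :
    sphereRotation a z - sphereRotation a w =
      (1 + conj a * a) * (z - w) / ((1 + conj a * z) * (1 + conj a * w)) := by
  rw [sphereRotation, sphereRotation, div_sub_div _ _ hz hw]
  ring

lemma one_add_norm_sphereRotation_sq (hz : z ∈ rotationDomain a) :
    1 + ‖sphereRotation a z‖ ^ 2 =
      (1 + ‖a‖ ^ 2) * (1 + ‖z‖ ^ 2) / ‖1 + conj a * z‖ ^ 2 := by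
  have hz' : ‖1 + conj a * z‖ ^ 2 ≠ 0 := pow_ne_zero 2 (norm_ne_zero_iff.2 hz)
  rw [sphereRotation, norm_div, div_pow, eq_div_iff hz', add_mul, div_mul_cancel₀ _ hz']
  simp only [← Complex.normSq_eq_norm_sq, Complex.normSq_apply, Complex.add_re, Complex.add_im,
    Complex.sub_re, Complex.sub_im, Complex.mul_re, Complex.mul_im, Complex.conj_re,
    Complex.conj_im, Complex.one_re, Complex.one_im]
  ring

lemma chordalDistSq_sphereRotation (hz : z ∈ rotationDomain a) (hw : w ∈ rotationDomain a) :
    chordalDistSq (sphereRotation a z) (sphereRotation a w) = chordalDistSq z w := by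
  have hz' : ‖1 + conj a * z‖ ≠ 0 := norm_ne_zero_iff.2 hz
  have hw' : ‖1 + conj a * w‖ ≠ 0 := norm_ne_zero_iff.2 hw
  simp only [chordalDistSq, one_add_norm_sphereRotation_sq hz, one_add_norm_sphereRotation_sq hw,
    dist_eq_norm, sphereRotation_sub_sphereRotation hz hw, norm_div, norm_mul,
    norm_one_add_conj_mul_self]
  generalize ‖1 + conj a * z‖ = p, ‖1 + conj a * w‖ = q at hz' hw'
  field_simp

end SphereRotation

section SphericalMeasure

variable {F : Type*} [NormedAddCommGroup F] [NormedSpace ℝ F]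

/-- The density of the spherical measure in the stereographic coordinate. -/
noncomputable def sphericalDensity (z : ℂ) : ℝ :=
  1 / (π * (1 + ‖z‖ ^ 2) ^ 2)

/-- The image under stereographic projection of the uniform probability measure on the sphere,
i.e. the measure `muV` transported to the complex plane. -/
noncomputable def sphericalMeasure : Measure ℂ :=
  volume.withDensity fun z => ENNReal.ofReal (sphericalDensity z)

lemma measurable_sphericalDensity : Measurable sphericalDensity := by
  unfold sphericalDensity
  fun_prop

lemma sphericalDensity_nonneg (z : ℂ) : 0 ≤ sphericalDensity z := by
  unfold sphericalDensity
  positivity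

lemma integral_sphericalMeasure (g : ℂ → F) :
    ∫ z, g z ∂sphericalMeasure = ∫ z, sphericalDensity z • g z := by
  rw [sphericalMeasure, integral_withDensity_eq_integral_toReal_smul
    measurable_sphericalDensity.ennreal_ofReal (by simp)]
  simp only [ENNReal.toReal_ofReal (sphericalDensity_nonneg _)]

lemma measurePreserving_muV_sphericalMeasure (e : EuclideanSpace ℝ (Fin 2) ≃ₗᵢ[ℝ] ℂ) :
    MeasurePreserving e muV sphericalMeasure := by
  refine ⟨e.continuous.measurable, Measure.ext fun s hs => ?_⟩
  rw [Measure.map_apply e.continuous.measurable hs, muV, sphericalMeasure,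
    withDensity_apply _ hs, withDensity_apply _ (e.continuous.measurable hs),
    ← e.measurePreserving.setLIntegral_comp_preimage hs
      measurable_sphericalDensity.ennreal_ofReal]
  simp only [sphericalDensity, e.norm_map]

lemma norm_deriv_sphereRotation_sq_mul_sphericalDensity {a z : ℂ} (hz : z ∈ rotationDomain a) :
    ‖(1 + conj a * a) / (1 + conj a * z) ^ 2‖ ^ 2 * sphericalDensity (sphereRotation a z) =
      sphericalDensity z := by
  have hz' : ‖1 + conj a * z‖ ≠ 0 := norm_ne_zero_iff.2 hz
  simp only [sphericalDensity, one_add_norm_sphereRotation_sq hz, norm_div, norm_pow,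
    norm_one_add_conj_mul_self]
  generalize ‖1 + conj a * z‖ = p at hz'
  field_simp

lemma integral_comp_sphereRotation (a : ℂ) (g : ℂ → F) :
    ∫ z, g (sphereRotation a z) ∂sphericalMeasure = ∫ z, g z ∂sphericalMeasure := by
  have hs : MeasurableSet (rotationDomain a) := (isOpen_rotationDomain a).measurableSet
  rw [integral_sphericalMeasure, integral_sphericalMeasure]
  symm
  calc
    ∫ w, sphericalDensity w • g w
      = ∫ w in sphereRotation a '' rotationDomain a, sphericalDensity w • g w := by
        rw [(bijOn_sphereRotation a).image_eq, restrict_rotationDomain]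
    _ = ∫ z in rotationDomain a, ‖(1 + conj a * a) / (1 + conj a * z) ^ 2‖ ^ 2 •
          sphericalDensity (sphereRotation a z) • g (sphereRotation a z) :=
        integral_image_eq_integral_norm_deriv_sq_smul hs
          (fun z hz => (hasDerivAt_sphereRotation hz).hasDerivWithinAt)
          (bijOn_sphereRotation a).injOn _
    _ = ∫ z in rotationDomain a, sphericalDensity z • g (sphereRotation a z) :=
        setIntegral_congr_fun hs fun z hz => by
          simp only [smul_smul, norm_deriv_sphereRotation_sq_mul_sphericalDensity hz]
    _ = ∫ z, sphericalDensity z • g (sphereRotation a z) := by rw [restrict_rotationDomain]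

lemma bijOn_sq_div_one_add_sq :
    BijOn (fun r : ℝ => r ^ 2 / (1 + r ^ 2)) (Ioi 0) (Ioo 0 1) := by
  refine ⟨fun r hr => ?_, fun r hr s hs hrs => ?_, fun t ht => ?_⟩
  · have hr : 0 < r := hr
    exact ⟨by positivity, (div_lt_one (by positivity)).2 (by linarith)⟩
  · have hsq : r ^ 2 = s ^ 2 := by
      have := (div_eq_div_iff (by positivity) (by positivity)).1 hrs
      linarith
    exact (sq_eq_sq₀ (le_of_lt hr) (le_of_lt hs)).1 hsq
  · have ht' : 0 < 1 - t := sub_pos.2 ht.2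
    have hpos : 0 < t / (1 - t) := div_pos ht.1 ht'
    refine ⟨√(t / (1 - t)), sqrt_pos.2 hpos, ?_⟩
    simp only [sq_sqrt hpos.le]
    field_simp
    ring

lemma hasDerivAt_sq_div_one_add_sq (r : ℝ) :
    HasDerivAt (fun r : ℝ => r ^ 2 / (1 + r ^ 2)) (2 * r / (1 + r ^ 2) ^ 2) r := by
  have hnum : HasDerivAt (fun r : ℝ => r ^ 2) (2 * r) r := by simpa using hasDerivAt_pow 2 r
  exact (hnum.div (hnum.const_add 1) (by positivity)).congr_deriv (by ring)

lemma integral_comp_chordalDistSq_zero (g : ℝ → F) :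
    ∫ z, g (chordalDistSq 0 z) ∂sphericalMeasure = ∫ t in 0..1, g t := by
  symm
  calc
    ∫ t in 0..1, g t
      = ∫ t in (fun r : ℝ => r ^ 2 / (1 + r ^ 2)) '' Ioi 0, g t := by
        rw [bijOn_sq_div_one_add_sq.image_eq, intervalIntegral.integral_of_le zero_le_one,
          integral_Ioc_eq_integral_Ioo]
    _ = ∫ r in Ioi 0, |2 * r / (1 + r ^ 2) ^ 2| • g (r ^ 2 / (1 + r ^ 2)) :=
        integral_image_eq_integral_abs_deriv_smul measurableSet_Ioi
          (fun r _ => (hasDerivAt_sq_div_one_add_sq r).hasDerivWithinAt)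
          bijOn_sq_div_one_add_sq.injOn g
    _ = ∫ r in Ioi 0, (2 * π * r) • (1 / (π * (1 + r ^ 2) ^ 2)) • g (r ^ 2 / (1 + r ^ 2)) :=
        setIntegral_congr_fun measurableSet_Ioi fun r (hr : 0 < r) => by
          simp only [smul_smul, abs_of_pos (by positivity : 0 < 2 * r / (1 + r ^ 2) ^ 2)]
          congr 1
          field_simp
    _ = ∫ z : ℂ, sphericalDensity z • g (‖z‖ ^ 2 / (1 + ‖z‖ ^ 2)) :=
        (integral_fun_norm_complex fun r =>
          (1 / (π * (1 + r ^ 2) ^ 2)) • g (r ^ 2 / (1 + r ^ 2))).symm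
    _ = ∫ z, g (chordalDistSq 0 z) ∂sphericalMeasure := by
        simp only [integral_sphericalMeasure, chordalDistSq_zero_left]

lemma integral_comp_chordalDistSq (a : ℂ) (g : ℝ → F) :
    ∫ z, g (chordalDistSq a z) ∂sphericalMeasure = ∫ t in 0..1, g t := by
  rw [← integral_comp_chordalDistSq_zero,
    ← integral_comp_sphereRotation a fun z => g (chordalDistSq 0 z)]
  have hae : ∀ᵐ z ∂sphericalMeasure, z ∈ rotationDomain a :=
    withDensity_absolutelyContinuous _ _ (ae_mem_rotationDomain a)
  refine integral_congr_ae (hae.mono fun z hz => ?_)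
  beta_reduce
  rw [← chordalDistSq_sphereRotation (self_mem_rotationDomain a) hz, sphereRotation_self]

lemma integral_comp_chordalDistSq_muV (x : EuclideanSpace ℝ (Fin 2)) (g : ℝ → F) :
    ∫ y, g (chordalDistSq x y) ∂muV = ∫ t in 0..1, g t := by
  let e : EuclideanSpace ℝ (Fin 2) ≃ₗᵢ[ℝ] ℂ := Complex.orthonormalBasisOneI.repr.symm
  rw [← integral_comp_chordalDistSq (e x),
    ← (measurePreserving_muV_sphericalMeasure e).integral_comp
      e.toHomeomorph.measurableEmbedding]
  simp only [chordalDistSq_map]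

end SphericalMeasure

instance : IsProbabilityMeasure muV := by
  have h : ∫ _, (1 : ℝ) ∂muV = 1 := by
    rw [integral_comp_chordalDistSq_muV 0 fun _ => (1 : ℝ)]
    simp
  refine ⟨(ENNReal.toReal_eq_one_iff _).1 ?_⟩
  simpa [Measure.real] using h

lemma ae_muV_ne (x : EuclideanSpace ℝ (Fin 2)) : ∀ᵐ y ∂muV, y ≠ x :=
  withDensity_absolutelyContinuous _ _ (Measure.ae_ne volume x)

lemma integral_energy_kernel_muV (x : EuclideanSpace ℝ (Fin 2)) :
    ∫ y, (1 / 2 * log (1 + ‖x‖ ^ 2) + 1 / 2 * log (1 + ‖y‖ ^ 2) - log (dist x y)) ∂muV = 1 / 2 :=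
  calc
    _ = ∫ y, -(1 / 2) * log (chordalDistSq x y) ∂muV :=
      integral_congr_ae <| (ae_muV_ne x).mono fun y hyx =>
        (neg_half_log_chordalDistSq hyx.symm).symm
    _ = ∫ t in 0..1, -(1 / 2) * log t :=
      integral_comp_chordalDistSq_muV x fun t => -(1 / 2) * log t
    _ = 1 / 2 := by
      rw [intervalIntegral.integral_const_mul, integral_log]
      norm_num

/-- The weighted logarithmic energy of `μ_V` for `V(x) = log(1+|x|²)` equals `1/2`:
`∬ ((1/2)log(1+|x|²) + (1/2)log(1+|y|²) − log|x−y|) dμ_V(x)dμ_V(y) = 1/2`. -/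
theorem energy_muV_eq_half :
    ∫ x, (∫ y, ((1/2) * Real.log (1 + ‖x‖^2) + (1/2) * Real.log (1 + ‖y‖^2)
        - Real.log (dist x y)) ∂muV) ∂muV = 1/2 := by
  simp only [integral_energy_kernel_muV]
  rw [integral_const, probReal_univ, one_smul]
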